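/- Assume in addition that κ₁(s) = 0 for all s ∈ I (developable case). Then for all s ∈ I the striction curve σ satisfies σ'(s) = τ₁(s)·v₀(s), σ''(s) = τ₁'(s)·v₀(s) + τ₁(s)·n₀(s), and σ'''(s) = (τ₁''(s) − τ₁(s))·v₀(s) + 2τ₁'(s)·n₀(s) + τ₀(s)τ₁(s)·t₀(s). -/

import Mathlib

noncomputable section
open scoped RealInnerProductSpace

/-- Euclidean 3-space `ℝ³`. -/
abbrev E3 : Type := EuclideanSpace ℝ (Fin 3)

/-- The cross product on `E3`. -/
def cross (u v : E3) : E3 :=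
  (WithLp.equiv 2 (Fin 3 → ℝ)).symm
    ![u 1 * v 2 - u 2 * v 1, u 2 * v 0 - u 0 * v 2, u 0 * v 1 - u 1 * v 0]

/-- Determinant of the 3×3 matrix with columns `u`, `v`, `w`. -/
def det3 (u v w : E3) : ℝ :=
  Matrix.det !![u 0, v 0, w 0; u 1, v 1, w 1; u 2, v 2, w 2]

namespace Ruled

/-- The director curve `e = v₀`. -/
def e (v₀ : ℝ → E3) : ℝ → E3 := v₀

/-- The base curve `r = v₀ × v₁`. -/
def r (v₀ v₁ : ℝ → E3) : ℝ → E3 := fun s => cross (v₀ s) (v₁ s)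

/-- The parametrization `F(s,t) = r(s) + t • e(s)` of the ruled surface. -/
def F (v₀ v₁ : ℝ → E3) (s t : ℝ) : E3 := r v₀ v₁ s + t • v₀ s

/-- `n₀ = v₀'`. -/
def n₀ (v₀ : ℝ → E3) : ℝ → E3 := fun s => deriv v₀ s

/-- `κ₁ = ⟪v₀', v₁'⟫`, the ε-part of the dual curvature. -/
def κ₁ (v₀ v₁ : ℝ → E3) : ℝ → ℝ := fun s => ⟪deriv v₀ s, deriv v₁ s⟫

/-- `n₁ = v₁' - κ₁ • v₀'`. -/
def n₁ (v₀ v₁ : ℝ → E3) : ℝ → E3 := fun s => deriv v₁ s - κ₁ v₀ v₁ s • deriv v₀ s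

/-- `t₀ = v₀ × n₀`. -/
def t₀ (v₀ : ℝ → E3) : ℝ → E3 := fun s => cross (v₀ s) (n₀ v₀ s)

/-- `t₁ = v₀ × n₁ + v₁ × n₀`. -/
def t₁ (v₀ v₁ : ℝ → E3) : ℝ → E3 :=
  fun s => cross (v₀ s) (n₁ v₀ v₁ s) + cross (v₁ s) (n₀ v₀ s)

/-- `τ₀ = ⟪n₀', t₀⟫`, the real part of the dual torsion. -/
def τ₀ (v₀ : ℝ → E3) : ℝ → ℝ := fun s => ⟪deriv (n₀ v₀) s, t₀ v₀ s⟫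

/-- `τ₁ = ⟪n₀', t₁⟫ + ⟪n₁', t₀⟫`, the ε-part of the dual torsion. -/
def τ₁ (v₀ v₁ : ℝ → E3) : ℝ → ℝ :=
  fun s => ⟪deriv (n₀ v₀) s, t₁ v₀ v₁ s⟫ + ⟪deriv (n₁ v₀ v₁) s, t₀ v₀ s⟫

/-- The striction curve `σ(s) = r(s) - ⟪r'(s), e'(s)⟫ • e(s)`. -/
def strict (v₀ v₁ : ℝ → E3) : ℝ → E3 :=
  fun s => r v₀ v₁ s - ⟪deriv (r v₀ v₁) s, deriv (e v₀) s⟫ • e v₀ s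

end Ruled

open Ruled

theorem inner_E3 (u v : E3) : ⟪u, v⟫ = u 0 * v 0 + u 1 * v 1 + u 2 * v 2 := by
  simp [PiLp.inner_apply, Fin.sum_univ_three]; ring

theorem cross_0 (u v : E3) : cross u v 0 = u 1 * v 2 - u 2 * v 1 := rfl
theorem cross_1 (u v : E3) : cross u v 1 = u 2 * v 0 - u 0 * v 2 := rfl
theorem cross_2 (u v : E3) : cross u v 2 = u 0 * v 1 - u 1 * v 0 := rfl

theorem ext_E3 {u v : E3} (h0 : u 0 = v 0) (h1 : u 1 = v 1) (h2 : u 2 = v 2) : u = v := by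
  ext i; fin_cases i <;> assumption

theorem frame_expand (v p w : E3) (hv : ⟪v, v⟫ = 1) (hp : ⟪p, p⟫ = 1) (hvp : ⟪v, p⟫ = 0) :
    w = ⟪w, v⟫ • v + ⟪w, p⟫ • p + ⟪w, cross v p⟫ • cross v p := by
  have hd : ⟪cross v p, cross v p⟫ = 1 := by
    simp only [inner_E3, cross_0, cross_1, cross_2] at *
    linear_combination (p 0 * p 0 + p 1 * p 1 + p 2 * p 2) * hv + hp - (v 0 * p 0 + v 1 * p 1 + v 2 * p 2) * hvp
  have h1 : ⟪v, cross v p⟫ = 0 := by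
    simp only [inner_E3, cross_0, cross_1, cross_2]; ring
  have h2 : ⟪p, cross v p⟫ = 0 := by
    simp only [inner_E3, cross_0, cross_1, cross_2]; ring
  generalize cross v p = d at *
  simp only [inner_E3] at *
  have hM : !![v 0, v 1, v 2; p 0, p 1, p 2; d 0, d 1, d 2] *
      !![v 0, p 0, d 0; v 1, p 1, d 1; v 2, p 2, d 2] = (1 : Matrix (Fin 3) (Fin 3) ℝ) := by
    ext i j
    fin_cases i <;> fin_cases j <;>
      simp [Matrix.mul_apply, Fin.sum_univ_three] <;> linarith
  have hN := mul_eq_one_comm.mp hM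
  have E : ∀ i j, _ := fun i j => congrFun (congrFun hN i) j
  have e00 := E 0 0
  have e01 := E 0 1
  have e02 := E 0 2
  have e11 := E 1 1
  have e12 := E 1 2
  have e22 := E 2 2
  simp [Matrix.mul_apply, Fin.sum_univ_three] at e00 e01 e02 e11 e12 e22
  apply ext_E3 <;> simp
  · linear_combination -w 0 * e00 - w 1 * e01 - w 2 * e02
  · linear_combination -w 0 * e01 - w 1 * e11 - w 2 * e12
  · linear_combination -w 0 * e02 - w 1 * e12 - w 2 * e22

theorem hasDerivAt_coord {f : ℝ → E3} {f' : E3} {s : ℝ} (h : HasDerivAt f f' s) (i : Fin 3) :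
    HasDerivAt (fun x => f x i) (f' i) s :=
  (EuclideanSpace.proj i : E3 →L[ℝ] ℝ).hasFDerivAt.comp_hasDerivAt s h

theorem hasDerivAt_cross {f g : ℝ → E3} {f' g' : E3} {s : ℝ}
    (hf : HasDerivAt f f' s) (hg : HasDerivAt g g' s) :
    HasDerivAt (fun x => cross (f x) (g x)) (cross f' (g s) + cross (f s) g') s := by
  have hF := hasDerivAt_coord hf
  have hG := hasDerivAt_coord hg
  have key : ∀ i, HasDerivAt (fun x => cross (f x) (g x) i) ((cross f' (g s) + cross (f s) g') i) s := by
    intro i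
    fin_cases i
    · refine HasDerivAt.congr_deriv (((hF 1).mul (hG 2)).sub ((hF 2).mul (hG 1))) ?_
      change _ = (cross f' (g s) 0 + cross (f s) g' 0)
      simp only [cross_0, cross_1, cross_2]; ring
    · refine HasDerivAt.congr_deriv (((hF 2).mul (hG 0)).sub ((hF 0).mul (hG 2))) ?_
      change _ = (cross f' (g s) 1 + cross (f s) g' 1)
      simp only [cross_0, cross_1, cross_2]; ring
    · refine HasDerivAt.congr_deriv (((hF 0).mul (hG 1)).sub ((hF 1).mul (hG 0))) ?_
      change _ = (cross f' (g s) 2 + cross (f s) g' 2)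
      simp only [cross_0, cross_1, cross_2]; ring
  exact (EuclideanSpace.equiv (Fin 3) ℝ).symm.hasFDerivAt.comp_hasDerivAt s (hasDerivAt_pi.mpr key)

theorem contDiffOn_cross {f g : ℝ → E3} {I : Set ℝ}
    (hf : ContDiffOn ℝ (⊤ : ℕ∞) f I) (hg : ContDiffOn ℝ (⊤ : ℕ∞) g I) :
    ContDiffOn ℝ (⊤ : ℕ∞) (fun x => cross (f x) (g x)) I := by
  rw [contDiffOn_euclidean] at *
  intro i
  fin_cases i
  · exact ((hf 1).mul (hg 2)).sub ((hf 2).mul (hg 1))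
  · exact ((hf 2).mul (hg 0)).sub ((hf 0).mul (hg 2))
  · exact ((hf 0).mul (hg 1)).sub ((hf 1).mul (hg 0))

theorem cd_deriv {E : Type*} [NormedAddCommGroup E] [NormedSpace ℝ E] {f : ℝ → E} {I : Set ℝ}
    (hI : IsOpen I) (hf : ContDiffOn ℝ (⊤ : ℕ∞) f I) : ContDiffOn ℝ (⊤ : ℕ∞) (deriv f) I :=
  hf.deriv_of_isOpen hI (by simp)

theorem cd_hd {E : Type*} [NormedAddCommGroup E] [NormedSpace ℝ E] {f : ℝ → E} {I : Set ℝ}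
    (hI : IsOpen I) (hf : ContDiffOn ℝ (⊤ : ℕ∞) f I) {s : ℝ} (hs : s ∈ I) :
    HasDerivAt f (deriv f s) s :=
  ((hf.contDiffAt (hI.mem_nhds hs)).differentiableAt (by simp)).hasDerivAt

theorem deriv_eq_on {E : Type*} [NormedAddCommGroup E] [NormedSpace ℝ E] {f g : ℝ → E} {g' : E}
    {I : Set ℝ} (hI : IsOpen I) (h : ∀ s ∈ I, f s = g s) {s : ℝ} (hs : s ∈ I)
    (hg : HasDerivAt g g' s) : deriv f s = g' :=
  (hg.congr_of_eventuallyEq (Filter.eventuallyEq_of_mem (hI.mem_nhds hs) h)).deriv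

theorem alg_main (v p q u x y : E3)
    (hv : ⟪v, v⟫ = 1) (hp : ⟪p, p⟫ = 1) (hvp : ⟪v, p⟫ = 0) (hpq : ⟪p, q⟫ = 0) (hvq : ⟪v, q⟫ = -1)
    (hvu : ⟪v, u⟫ = 0) (hvx : ⟪p, u⟫ + ⟪v, x⟫ = 0) (hpx : ⟪p, x⟫ = 0) :
    cross p u + cross v x + ((⟪x, cross v q⟫ + ⟪y, cross v p⟫) • v + ⟪x, cross v p⟫ • p) =
      (⟪q, cross v x + cross u p⟫ + ⟪y, cross v p⟫) • v := by
  have hq : q = -v + ⟪q, cross v p⟫ • cross v p := by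
    have := frame_expand v p q hv hp hvp
    rw [real_inner_comm v q, real_inner_comm p q, hpq, hvq] at this
    simpa using this
  have hu := frame_expand v p u hv hp hvp
  rw [real_inner_comm v u, hvu, zero_smul, zero_add, real_inner_comm p u] at hu
  have hx := frame_expand v p x hv hp hvp
  have hvx' : ⟪v, x⟫ = -⟪p, u⟫ := by linarith
  rw [real_inner_comm v x, real_inner_comm p x, hpx, zero_smul, add_zero, hvx'] at hx
  generalize ⟪q, cross v p⟫ = a at hq
  generalize ⟪u, cross v p⟫ = b at hu
  generalize ⟪p, u⟫ = c at *
  have hd : ⟪cross v p, cross v p⟫ = 1 := by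
    simp only [inner_E3, cross_0, cross_1, cross_2] at *
    linear_combination (p 0 * p 0 + p 1 * p 1 + p 2 * p 2) * hv + hp - (v 0 * p 0 + v 1 * p 1 + v 2 * p 2) * hvp
  have h1 : ⟪v, cross v p⟫ = 0 := by
    simp only [inner_E3, cross_0, cross_1, cross_2]; ring
  have h2 : ⟪p, cross v p⟫ = 0 := by
    simp only [inner_E3, cross_0, cross_1, cross_2]; ring
  have cvd : cross v (cross v p) = -p := by
    simp only [inner_E3] at hv hvp
    apply ext_E3 <;> simp [cross_0, cross_1, cross_2]
    · linear_combination v 0 * hvp - p 0 * hv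
    · linear_combination v 1 * hvp - p 1 * hv
    · linear_combination v 2 * hvp - p 2 * hv
  have cpd : cross p (cross v p) = v := by
    simp only [inner_E3] at hp hvp
    apply ext_E3 <;> simp [cross_0, cross_1, cross_2]
    · linear_combination -p 0 * hvp + v 0 * hp
    · linear_combination -p 1 * hvp + v 1 * hp
    · linear_combination -p 2 * hvp + v 2 * hp
  have c_add : ∀ a b c : E3, cross a (b + c) = cross a b + cross a c := by
    intro a b c; apply ext_E3 <;> simp [cross_0, cross_1, cross_2] <;> ring
  have c_smul : ∀ (a b : E3) (k : ℝ), cross a (k • b) = k • cross a b := by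
    intro a b c; apply ext_E3 <;> simp [cross_0, cross_1, cross_2] <;> ring
  have c_neg : ∀ (a b : E3), cross a (-b) = - cross a b := by
    intro a b; apply ext_E3 <;> simp [cross_0, cross_1, cross_2] <;> ring
  have c_self : ∀ (a : E3), cross a a = 0 := by
    intro a; apply ext_E3 <;> simp [cross_0, cross_1, cross_2] <;> ring
  have c_anti : cross u p = - cross p u := by
    apply ext_E3 <;> simp [cross_0, cross_1, cross_2] <;> ring
  have c_pv : cross p v = - cross v p := by
    apply ext_E3 <;> simp [cross_0, cross_1, cross_2] <;> ring
  generalize hm : ⟪x, cross v p⟫ = m at *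
  have e1 : cross p u = b • v := by
    rw [hu]; simp only [c_add, c_smul, c_self, cpd]; simp
  have e2 : cross v x = -m • p := by
    rw [hx]; simp only [c_add, c_smul, c_self, cvd]; simp
  have e3 : cross v q = -a • p := by
    rw [hq]; simp only [c_add, c_smul, c_neg, c_self, cvd]; simp
  rw [c_anti, e1, e2, e3]
  have hxp : ⟪x, p⟫ = 0 := by rw [real_inner_comm]; exact hpx
  have hqp : ⟪q, p⟫ = 0 := by rw [real_inner_comm]; exact hpq
  have hqv : ⟪q, v⟫ = -1 := by rw [real_inner_comm]; exact hvq
  simp only [inner_add_right, inner_neg_right, inner_smul_right, hxp, hqp, hqv]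
  module

/-- In the developable case the striction curve satisfies `σ' = τ₁ • v₀`,
`σ'' = τ₁' • v₀ + τ₁ • n₀` and `σ⁽³⁾ = (τ₁'' - τ₁) • v₀ + 2τ₁' • n₀ + τ₀τ₁ • t₀`. -/
theorem striction_derivatives_developable
    (I : Set ℝ) (v₀ v₁ : ℝ → E3)
    (hI : IsOpen I) (hI' : I.OrdConnected)
    (hv₀ : ContDiffOn ℝ (⊤ : ℕ∞) v₀ I) (hv₁ : ContDiffOn ℝ (⊤ : ℕ∞) v₁ I)
    (hunit : ∀ s ∈ I, ‖v₀ s‖ = 1) (horth : ∀ s ∈ I, ⟪v₀ s, v₁ s⟫ = 0)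
    (harc : ∀ s ∈ I, ‖deriv v₀ s‖ = 1)
    (hdev : ∀ s ∈ I, κ₁ v₀ v₁ s = 0) :
    ∀ s ∈ I,
      deriv (strict v₀ v₁) s = τ₁ v₀ v₁ s • v₀ s ∧
      deriv (deriv (strict v₀ v₁)) s =
        deriv (τ₁ v₀ v₁) s • v₀ s + τ₁ v₀ v₁ s • n₀ v₀ s ∧
      deriv (deriv (deriv (strict v₀ v₁))) s =
        (deriv (deriv (τ₁ v₀ v₁)) s - τ₁ v₀ v₁ s) • v₀ s +
          (2 * deriv (τ₁ v₀ v₁) s) • n₀ v₀ s +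
          (τ₀ v₀ s * τ₁ v₀ v₁ s) • t₀ v₀ s := by
  have hp := cd_deriv hI hv₀
  have hq := cd_deriv hI hp
  have hx := cd_deriv hI hv₁
  have hy := cd_deriv hI hx
  have Dv : ∀ s ∈ I, HasDerivAt v₀ (deriv v₀ s) s := fun s hs => cd_hd hI hv₀ hs
  have Dp : ∀ s ∈ I, HasDerivAt (deriv v₀) (deriv (deriv v₀) s) s := fun s hs => cd_hd hI hp hs
  have Du : ∀ s ∈ I, HasDerivAt v₁ (deriv v₁ s) s := fun s hs => cd_hd hI hv₁ hs
  have Dx : ∀ s ∈ I, HasDerivAt (deriv v₁) (deriv (deriv v₁) s) s := fun s hs => cd_hd hI hx hs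
  have fvv : ∀ s ∈ I, ⟪v₀ s, v₀ s⟫ = 1 := fun s hs => by
    rw [real_inner_self_eq_norm_sq, hunit s hs]; norm_num
  have fpp : ∀ s ∈ I, ⟪deriv v₀ s, deriv v₀ s⟫ = 1 := fun s hs => by
    rw [real_inner_self_eq_norm_sq, harc s hs]; norm_num
  have key : ∀ {f g : ℝ → E3} {f' g' : E3} {c : ℝ} {s : ℝ}, s ∈ I → (∀ s ∈ I, ⟪f s, g s⟫ = c) →
      HasDerivAt f f' s → HasDerivAt g g' s → ⟪f s, g'⟫ + ⟪f', g s⟫ = 0 := by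
    intro f g f' g' c s hs h hf hg
    rw [← (hf.inner ℝ hg).deriv]
    exact deriv_eq_on hI h hs (hasDerivAt_const s c)
  have fvp : ∀ s ∈ I, ⟪v₀ s, deriv v₀ s⟫ = 0 := fun s hs => by
    have := key hs fvv (Dv s hs) (Dv s hs)
    rw [real_inner_comm (v₀ s) (deriv v₀ s)] at this
    linarith
  have fpq : ∀ s ∈ I, ⟪deriv v₀ s, deriv (deriv v₀) s⟫ = 0 := fun s hs => by
    have := key hs fpp (Dp s hs) (Dp s hs)
    rw [real_inner_comm (deriv v₀ s) (deriv (deriv v₀) s)] at this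
    linarith
  have fvq : ∀ s ∈ I, ⟪v₀ s, deriv (deriv v₀) s⟫ = -1 := fun s hs => by
    have := key hs fvp (Dv s hs) (Dp s hs)
    rw [fpp s hs] at this
    linarith
  have fvx : ∀ s ∈ I, ⟪deriv v₀ s, v₁ s⟫ + ⟪v₀ s, deriv v₁ s⟫ = 0 := fun s hs => by
    have := key hs horth (Dv s hs) (Du s hs)
    linarith
  have fpx : ∀ s ∈ I, ⟪deriv v₀ s, deriv v₁ s⟫ = 0 := hdev
  have Dr : ∀ s ∈ I, HasDerivAt (r v₀ v₁)
      (cross (deriv v₀ s) (v₁ s) + cross (v₀ s) (deriv v₁ s)) s := fun s hs =>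
    hasDerivAt_cross (Dv s hs) (Du s hs)
  have hn1 : ∀ s ∈ I, n₁ v₀ v₁ s = deriv v₁ s := fun s hs => by
    simp [n₁, hdev s hs]
  have hτ : ∀ s ∈ I, τ₁ v₀ v₁ s =
      ⟪deriv (deriv v₀) s, cross (v₀ s) (deriv v₁ s) + cross (v₁ s) (deriv v₀ s)⟫ +
      ⟪deriv (deriv v₁) s, cross (v₀ s) (deriv v₀ s)⟫ := fun s hs => by
    have h1 : deriv (n₁ v₀ v₁) s = deriv (deriv v₁) s := deriv_eq_on hI hn1 hs (Dx s hs)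
    simp only [τ₁, t₁, t₀, h1, hn1 s hs]
    rfl
  have hτs : ContDiffOn ℝ (⊤ : ℕ∞) (τ₁ v₀ v₁) I :=
    ((hq.inner ℝ ((contDiffOn_cross hv₀ hx).add (contDiffOn_cross hv₁ hp))).add
      (hy.inner ℝ (contDiffOn_cross hv₀ hp))).congr hτ
  have hσ : ∀ s ∈ I, strict v₀ v₁ s =
      cross (v₀ s) (v₁ s) + ⟪deriv v₁ s, cross (v₀ s) (deriv v₀ s)⟫ • v₀ s := fun s hs => by
    have : ⟪deriv (r v₀ v₁) s, deriv v₀ s⟫ = -⟪deriv v₁ s, cross (v₀ s) (deriv v₀ s)⟫ := by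
      rw [(Dr s hs).deriv]
      simp only [inner_E3, PiLp.add_apply, cross_0, cross_1, cross_2]
      ring
    simp only [strict, e, this, r]
    module
  have c_self : ∀ (a : E3), cross a a = 0 := by
    intro a; apply ext_E3 <;> simp [cross_0, cross_1, cross_2] <;> ring
  have D1 : ∀ s ∈ I, deriv (strict v₀ v₁) s = τ₁ v₀ v₁ s • v₀ s := fun s hs => by
    rw [hτ s hs, ← alg_main _ _ _ _ _ _ (fvv s hs) (fpp s hs) (fvp s hs) (fpq s hs) (fvq s hs)
      (horth s hs) (fvx s hs) (fpx s hs)]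
    refine deriv_eq_on hI hσ hs ?_
    refine HasDerivAt.congr_deriv ((hasDerivAt_cross (Dv s hs) (Du s hs)).add
      (((Dx s hs).inner ℝ (hasDerivAt_cross (Dv s hs) (Dp s hs))).smul (Dv s hs))) ?_
    rw [c_self, zero_add]
    module
  have D2 : ∀ s ∈ I, deriv (deriv (strict v₀ v₁)) s =
      deriv (τ₁ v₀ v₁) s • v₀ s + τ₁ v₀ v₁ s • n₀ v₀ s := fun s hs => by
    refine deriv_eq_on hI D1 hs ?_
    refine HasDerivAt.congr_deriv ((cd_hd hI hτs hs).smul (Dv s hs)) ?_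
    simp only [n₀]; module
  intro s hs
  refine ⟨D1 s hs, D2 s hs, deriv_eq_on hI D2 hs ?_⟩
  have hq' : deriv (deriv v₀) s = -v₀ s + τ₀ v₀ s • t₀ v₀ s := by
    have := frame_expand (v₀ s) (deriv v₀ s) (deriv (deriv v₀) s) (fvv s hs) (fpp s hs) (fvp s hs)
    rw [real_inner_comm (v₀ s) (deriv (deriv v₀) s),
      real_inner_comm (deriv v₀ s) (deriv (deriv v₀) s), fpq s hs, fvq s hs] at this
    rw [zero_smul, add_zero, neg_one_smul] at this
    exact this
  refine HasDerivAt.congr_deriv (((cd_hd hI (cd_deriv hI hτs) hs).smul (Dv s hs)).add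
    ((cd_hd hI hτs hs).smul (Dp s hs))) ?_
  rw [hq']
  simp only [n₀]; module
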